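/- Let ω = (w₁,…,w_m) be a weight vector and let A₁,…,A_m be n×n positive definite complex matrices. Then a positive definite matrix X belongs to Γ(ω; A₁,…,A_m) if and only if X⁻¹ belongs to Γ(ω; A₁⁻¹,…,A_m⁻¹); that is, Γ(ω; A₁⁻¹,…,A_m⁻¹) = { X⁻¹ : X ∈ Γ(ω; A₁,…,A_m) }. -/

import Mathlib

/-!
The geometric mean satisfies `A⁻¹ ♯ B⁻¹ = (A ♯ B)⁻¹` for positive definite `A`, `B`
(`geom_inv_inv`), because the square root commutes with inversion (`msqrt_inv`). Since
`log C⁻¹ = -log C` for positive definite `C` (`mlog_inv`), replacing every `Aᵢ` and `X` by their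
inverses changes the sign of `∑ᵢ wᵢ log(Aᵢ ♯ X⁻¹)`, so the defining equation of `Γ` is preserved.
The identities for the square root and the logarithm are read off from Mathlib's continuous
functional calculus, with which `herm` agrees on Hermitian matrices (`herm_eq_cfc`).
-/

open Matrix
open scoped ComplexOrder

/-- Functional calculus for Hermitian matrices: apply `f` to the eigenvalues. -/
noncomputable def herm {n : ℕ} (f : ℝ → ℝ) (A : Matrix (Fin n) (Fin n) ℂ) :
    Matrix (Fin n) (Fin n) ℂ :=
  if hA : A.IsHermitian then
    (hA.eigenvectorUnitary : Matrix (Fin n) (Fin n) ℂ) *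
      Matrix.diagonal (fun i => (f (hA.eigenvalues i) : ℂ)) *
      (star (hA.eigenvectorUnitary : Matrix (Fin n) (Fin n) ℂ))
  else 0

/-- Square root of a positive definite matrix. -/
noncomputable def msqrt {n : ℕ} (A : Matrix (Fin n) (Fin n) ℂ) : Matrix (Fin n) (Fin n) ℂ :=
  herm Real.sqrt A

/-- Logarithm of a positive definite matrix. -/
noncomputable def mlog {n : ℕ} (A : Matrix (Fin n) (Fin n) ℂ) : Matrix (Fin n) (Fin n) ℂ :=
  herm Real.log A

/-- Real power of a positive definite matrix. -/
noncomputable def mpow {n : ℕ} (A : Matrix (Fin n) (Fin n) ℂ) (t : ℝ) :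
    Matrix (Fin n) (Fin n) ℂ :=
  herm (fun x => x ^ t) A

/-- Metric geometric mean `A ♯ B = A^{1/2} (A^{-1/2} B A^{-1/2})^{1/2} A^{1/2}`. -/
noncomputable def geom {n : ℕ} (A B : Matrix (Fin n) (Fin n) ℂ) : Matrix (Fin n) (Fin n) ℂ :=
  msqrt A * msqrt ((msqrt A)⁻¹ * B * (msqrt A)⁻¹) * msqrt A

/-- The solution set `Γ(ω; A₁,…,A_m)` of the spectral-geometric-mean equation
`∑ᵢ wᵢ log(Aᵢ ♯ X⁻¹) = 0` among positive definite matrices. -/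
noncomputable def Gamma {m n : ℕ} (w : Fin m → ℝ) (A : Fin m → Matrix (Fin n) (Fin n) ℂ) :
    Set (Matrix (Fin n) (Fin n) ℂ) :=
  {X | X.PosDef ∧ ∑ i, w i • mlog (geom (A i) X⁻¹) = 0}

theorem herm_eq_cfc {n : ℕ} (f : ℝ → ℝ) {A : Matrix (Fin n) (Fin n) ℂ} (hA : A.IsHermitian) :
    herm f A = cfc f A := by
  rw [hA.cfc_eq, Matrix.IsHermitian.cfc, Unitary.conjStarAlgAut_apply, herm, dif_pos hA]
  rfl

theorem spectrum_pos {n : ℕ} {A : Matrix (Fin n) (Fin n) ℂ} (hA : A.PosDef) {x : ℝ}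
    (hx : x ∈ spectrum ℝ A) : 0 < x := by
  rw [hA.1.spectrum_real_eq_range_eigenvalues] at hx
  obtain ⟨i, rfl⟩ := hx
  exact hA.eigenvalues_pos i

/-- Every function is continuous on the spectrum, which is finite. -/
theorem continuousOn_spectrum {n : ℕ} (f : ℝ → ℝ) {A : Matrix (Fin n) (Fin n) ℂ}
    (hA : A.PosDef) : ContinuousOn f (spectrum ℝ A) := by
  rw [hA.1.spectrum_real_eq_range_eigenvalues]
  exact (Set.finite_range _).continuousOn f

theorem herm_inv {n : ℕ} (f : ℝ → ℝ) {A : Matrix (Fin n) (Fin n) ℂ} (hA : A.PosDef) :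
    herm f A⁻¹ = cfc (fun x => f x⁻¹) A := by
  have hinv : cfc (fun x : ℝ => x⁻¹) A = A⁻¹ := by
    rw [cfc_ringInverse_id (p := IsSelfAdjoint) A hA.isUnit hA.1, nonsing_inv_eq_ringInverse]
  have hfin : (spectrum ℝ A).Finite := by
    rw [hA.1.spectrum_real_eq_range_eigenvalues]
    exact Set.finite_range _
  rw [herm_eq_cfc f hA.inv.1, cfc_comp' (p := IsSelfAdjoint) f (fun x => x⁻¹) A
    ((hfin.image _).continuousOn f) (continuousOn_spectrum _ hA) hA.1, hinv]

theorem msqrt_posDef {n : ℕ} {A : Matrix (Fin n) (Fin n) ℂ} (hA : A.PosDef) :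
    (msqrt A).PosDef := by
  rw [msqrt, herm, dif_pos hA.1, Matrix.IsUnit.posDef_star_right_conjugate_iff
    (Unitary.isUnit_coe (U := hA.1.eigenvectorUnitary)), Matrix.posDef_diagonal_iff]
  intro i
  exact_mod_cast Real.sqrt_pos.2 (hA.eigenvalues_pos i)

theorem msqrt_inv {n : ℕ} {A : Matrix (Fin n) (Fin n) ℂ} (hA : A.PosDef) :
    msqrt A⁻¹ = (msqrt A)⁻¹ := by
  have h := cfc_inv (p := IsSelfAdjoint) Real.sqrt A
    (fun x hx => (Real.sqrt_pos.2 (spectrum_pos hA hx)).ne') (continuousOn_spectrum _ hA) hA.1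
  rw [msqrt, msqrt, herm_inv _ hA, herm_eq_cfc _ hA.1, nonsing_inv_eq_ringInverse]
  simp only [Real.sqrt_inv]
  convert h

theorem mlog_inv {n : ℕ} {A : Matrix (Fin n) (Fin n) ℂ} (hA : A.PosDef) :
    mlog A⁻¹ = -mlog A := by
  rw [mlog, mlog, herm_inv _ hA, herm_eq_cfc _ hA.1, ← cfc_neg]
  simp only [Real.log_inv]

/-- The inner factor `A^{-1/2} B A^{-1/2}` of the geometric mean is positive definite. -/
theorem inner_posDef {n : ℕ} {A B : Matrix (Fin n) (Fin n) ℂ} (hA : A.PosDef) (hB : B.PosDef) :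
    ((msqrt A)⁻¹ * B * (msqrt A)⁻¹).PosDef := by
  have hS := (msqrt_posDef hA).inv
  have h := (Matrix.IsUnit.posDef_star_right_conjugate_iff (x := B) hS.isUnit).2 hB
  rwa [star_eq_conjTranspose, hS.1.eq] at h

theorem geom_posDef {n : ℕ} {A B : Matrix (Fin n) (Fin n) ℂ} (hA : A.PosDef) (hB : B.PosDef) :
    (geom A B).PosDef := by
  have hS := msqrt_posDef hA
  have h := (Matrix.IsUnit.posDef_star_right_conjugate_iff hS.isUnit).2
    (msqrt_posDef (inner_posDef hA hB))
  rwa [star_eq_conjTranspose, hS.1.eq] at h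

theorem geom_inv_inv {n : ℕ} {A B : Matrix (Fin n) (Fin n) ℂ} (hA : A.PosDef) (hB : B.PosDef) :
    geom A⁻¹ B⁻¹ = (geom A B)⁻¹ := by
  have h : (msqrt A)⁻¹⁻¹ * B⁻¹ * (msqrt A)⁻¹⁻¹ = ((msqrt A)⁻¹ * B * (msqrt A)⁻¹)⁻¹ := by
    simp only [Matrix.mul_inv_rev, Matrix.mul_assoc]
  rw [geom, geom, msqrt_inv hA, h, msqrt_inv (inner_posDef hA hB)]
  simp only [Matrix.mul_inv_rev, Matrix.mul_assoc]

theorem mem_Gamma_inv_iff {m n : ℕ} (w : Fin m → ℝ) (A : Fin m → Matrix (Fin n) (Fin n) ℂ)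
    (hA : ∀ i, (A i).PosDef) {X : Matrix (Fin n) (Fin n) ℂ} (hX : X.PosDef) :
    X ∈ Gamma w A ↔ X⁻¹ ∈ Gamma w (fun i => (A i)⁻¹) := by
  have h : ∀ i, mlog (geom (A i)⁻¹ X⁻¹⁻¹) = -mlog (geom (A i) X⁻¹) := fun i => by
    rw [geom_inv_inv (hA i) hX.inv, mlog_inv (geom_posDef (hA i) hX.inv)]
  simp only [Gamma, Set.mem_ofPred_eq, h, smul_neg, Finset.sum_neg_distrib, neg_eq_zero, hX,
    hX.inv, true_and]

theorem stmt7 {m n : ℕ} (w : Fin m → ℝ) (hw : ∀ i, 0 < w i) (hw1 : ∑ i, w i = 1)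
    (A : Fin m → Matrix (Fin n) (Fin n) ℂ) (hA : ∀ i, (A i).PosDef) :
    (∀ X : Matrix (Fin n) (Fin n) ℂ, X.PosDef →
      (X ∈ Gamma w A ↔ X⁻¹ ∈ Gamma w (fun i => (A i)⁻¹))) ∧
    Gamma w (fun i => (A i)⁻¹) = (fun X => X⁻¹) '' Gamma w A := by
  refine ⟨fun X hX => mem_Gamma_inv_iff w A hA hX, Set.ext fun Y => ⟨fun hY => ?_, ?_⟩⟩
  · have hYY : Y⁻¹⁻¹ = Y :=
      Matrix.nonsing_inv_nonsing_inv Y ((Matrix.isUnit_iff_isUnit_det Y).1 hY.1.isUnit)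
    exact ⟨Y⁻¹, (mem_Gamma_inv_iff w A hA hY.1.inv).2 (by rwa [hYY]), hYY⟩
  · rintro ⟨X, hX, rfl⟩
    exact (mem_Gamma_inv_iff w A hA hX.1).1 hX
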